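/- (Quasinormability criterion for 𝒟_{L^p}.) Let 1 ≤ p ≤ ∞ and let 0 ≤ s < t < u be real numbers. Then for every ε > 0 there exists C > 0 such that every φ ∈ 𝒮(ℝⁿ) admits a decomposition φ = φ₁ + φ₂ with φ₁, φ₂ ∈ 𝒮(ℝⁿ), ‖J_{−s} φ₁‖_p ≤ ε ‖J_{−t} φ‖_p, and ‖J_{−u} φ₂‖_p ≤ C ‖J_{−t} φ‖_p. (This is the inclusion L_t·B ⊂ ε·L_s·B + C·L_u·B of unit balls that characterizes the quasinormability of the Fréchet space 𝒟_{L^p}.) -/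

import Mathlib

open MeasureTheory Complex
open scoped FourierTransform ENNReal SchwartzMap

/-- The Bessel potential `J_z f = 𝓕⁻¹((1+|ξ|²)^(-z/2) · 𝓕 f)` of a function on `ℝⁿ`. -/
noncomputable def besselPotential (n : ℕ) (z : ℂ)
    (f : EuclideanSpace ℝ (Fin n) → ℂ) : EuclideanSpace ℝ (Fin n) → ℂ :=
  𝓕⁻ (fun ξ => ((1 : ℂ) + (‖ξ‖ : ℂ) ^ 2) ^ (-z / 2) * 𝓕 f ξ)

/-!
For `r > 0` the operator `J_r` is convolution with an integrable kernel `G`: since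
`(1 + |ξ|²)^(-r/2)` is the Laplace transform at `|ξ|²` of a Gamma distribution, `G` is a Gamma
mixture of heat kernels.
Take `r = t - s`, approximate `G` in `L¹` by a Schwartz function `S`, and split off
`φ₂ = S ⋆ J_{s-t} φ`. Then `J_{-s} (φ - φ₂) = (G - S) ⋆ J_{-t} φ`, while
`J_{-u} φ₂ = (J_{s-u} S) ⋆ J_{-t} φ` has a Schwartz kernel, so Young's inequality bounds both.
-/

open ProbabilityTheory ContinuousLinearMap
open scoped Convolution Real

section Young

theorem lintegral_mul_rpow_le {α : Type*} [MeasurableSpace α] {μ : Measure α} {f g : α → ℝ≥0∞}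
    (hf : AEMeasurable f μ) (hg : AEMeasurable g μ) {q : ℝ} (hq : 1 ≤ q) :
    (∫⁻ x, f x * g x ∂μ) ^ q ≤ (∫⁻ x, f x ∂μ) ^ (q - 1) * ∫⁻ x, f x * g x ^ q ∂μ := by
  have hq₀ : 0 < q := by positivity
  have jensen := eLpNorm'_le_eLpNorm'_mul_rpow_measure_univ one_pos hq
    (hg.aestronglyMeasurable.mono_ac (withDensity_absolutelyContinuous μ f))
  simp only [eLpNorm', enorm_eq_self, ENNReal.rpow_one, div_one, setLIntegral_univ,
    withDensity_apply _ MeasurableSet.univ, lintegral_withDensity_eq_lintegral_mul₀ hf hg,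
    lintegral_withDensity_eq_lintegral_mul₀ hf (hg.pow_const q), Pi.mul_apply] at jensen
  calc (∫⁻ x, f x * g x ∂μ) ^ q
    _ ≤ ((∫⁻ x, f x * g x ^ q ∂μ) ^ (1 / q) * (∫⁻ x, f x ∂μ) ^ (1 - 1 / q)) ^ q := by gcongr
    _ = (∫⁻ x, f x ∂μ) ^ (q - 1) * ∫⁻ x, f x * g x ^ q ∂μ := by
      rw [ENNReal.mul_rpow_of_nonneg _ _ hq₀.le, ← ENNReal.rpow_mul, ← ENNReal.rpow_mul,
        one_div_mul_cancel hq₀.ne', ENNReal.rpow_one, sub_mul, one_mul,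
        one_div_mul_cancel hq₀.ne', mul_comm]

section LConvolution

variable {G : Type*} [AddGroup G] [MeasurableSpace G] [MeasurableAdd₂ G] [MeasurableNeg G]
  {μ : Measure G} [SFinite μ] [μ.IsAddLeftInvariant] {f g : G → ℝ≥0∞}

theorem lintegral_lconvolution (hf : AEMeasurable f μ) (hg : AEMeasurable g μ) :
    ∫⁻ x, (f ⋆ₗ[μ] g) x ∂μ = (∫⁻ x, f x ∂μ) * ∫⁻ x, g x ∂μ := by
  simp only [lconvolution_def]
  rw [lintegral_lintegral_swap (by fun_prop), ← lintegral_mul_const'' _ hf]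
  refine lintegral_congr fun y => ?_
  have hgy : AEMeasurable (fun x => g (-y + x)) μ :=
    hg.comp_quasiMeasurePreserving (measurePreserving_add_left μ (-y)).quasiMeasurePreserving
  rw [lintegral_const_mul'' _ hgy, lintegral_add_left_eq_self]

theorem lconvolution_le_mul_essSup (hf : AEMeasurable f μ) (x : G) :
    (f ⋆ₗ[μ] g) x ≤ (∫⁻ y, f y ∂μ) * essSup g μ := by
  rw [lconvolution_def, ← lintegral_mul_const'' _ hf]
  have hg : ∀ᵐ y ∂μ, g (-y + x) ≤ essSup g μ :=
    ((quasiMeasurePreserving_add_right μ x).comp (quasiMeasurePreserving_neg μ)).ae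
      (ENNReal.ae_le_essSup g)
  refine lintegral_mono_ae ?_
  filter_upwards [hg] with y hy
  gcongr

theorem eLpNorm_lconvolution_le (hf : AEMeasurable f μ) (hg : AEMeasurable g μ) {p : ℝ≥0∞}
    (hp : 1 ≤ p) : eLpNorm (f ⋆ₗ[μ] g) p μ ≤ (∫⁻ x, f x ∂μ) * eLpNorm g p μ := by
  rcases eq_or_ne p ∞ with rfl | hp_top
  · simp only [eLpNorm_exponent_top, eLpNormEssSup, enorm_eq_self]
    exact essSup_le_of_ae_le _ (.of_forall (lconvolution_le_mul_essSup hf))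
  have hq : 1 ≤ p.toReal := by
    simpa using (ENNReal.toReal_le_toReal ENNReal.one_ne_top hp_top).2 hp
  have hp₀ : p ≠ 0 := (one_pos.trans_le hp).ne'
  simp only [eLpNorm_eq_lintegral_rpow_enorm_toReal hp₀ hp_top, enorm_eq_self]
  set q := p.toReal
  have hq₀ : 0 < q := by positivity
  set A := ∫⁻ x, f x ∂μ
  have hpow : ∫⁻ x, (f ⋆ₗ[μ] g) x ^ q ∂μ ≤ A ^ q * ∫⁻ x, g x ^ q ∂μ :=
    calc ∫⁻ x, (f ⋆ₗ[μ] g) x ^ q ∂μ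
      _ ≤ ∫⁻ x, A ^ (q - 1) * (f ⋆ₗ[μ] fun y => g y ^ q) x ∂μ :=
        lintegral_mono fun x => lintegral_mul_rpow_le hf (by fun_prop) hq
      _ = A ^ (q - 1) * A ^ (1 : ℝ) * ∫⁻ x, g x ^ q ∂μ := by
        rw [lintegral_const_mul'' _ (by fun_prop), lintegral_lconvolution hf (by fun_prop),
          ENNReal.rpow_one, mul_assoc]
      _ = A ^ q * ∫⁻ x, g x ^ q ∂μ := by
        rw [← ENNReal.rpow_add_of_nonneg _ _ (by linarith) zero_le_one, sub_add_cancel]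
  calc (∫⁻ x, (f ⋆ₗ[μ] g) x ^ q ∂μ) ^ (1 / q)
    _ ≤ (A ^ q * ∫⁻ x, g x ^ q ∂μ) ^ (1 / q) := by gcongr
    _ = A * (∫⁻ x, g x ^ q ∂μ) ^ (1 / q) := by
      rw [ENNReal.mul_rpow_of_nonneg _ _ (by positivity), ← ENNReal.rpow_mul,
        mul_one_div_cancel hq₀.ne', ENNReal.rpow_one]

end LConvolution

section Convolution

variable {𝕜 E E' F G : Type*} [NontriviallyNormedField 𝕜]
  [NormedAddCommGroup E] [NormedSpace 𝕜 E] [NormedAddCommGroup E'] [NormedSpace 𝕜 E']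
  [NormedAddCommGroup F] [NormedSpace 𝕜 F] [AddCommGroup G] [MeasurableSpace G] {μ : Measure G}

theorem convolutionExists_of_integrable_of_bddAbove [MeasurableAdd₂ G] [MeasurableNeg G]
    [SFinite μ] [μ.IsAddLeftInvariant] (L : E →L[𝕜] E' →L[𝕜] F) {f : G → E} {g : G → E'}
    (hf : Integrable f μ) (hg : AEStronglyMeasurable g μ) (hgb : BddAbove (Set.range (‖g ·‖))) :
    ConvolutionExists f g L μ := fun _ =>
  BddAbove.convolutionExistsAt L (hgb.mono (Set.image_subset_range _ _)) MeasurableSet.univ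
    (Set.subset_univ _) hf.integrableOn hg

variable [NormedSpace ℝ F]

theorem enorm_convolution_le (L : E →L[𝕜] E' →L[𝕜] F) (f : G → E) (g : G → E') (x : G) :
    ‖(f ⋆[L, μ] g) x‖ₑ ≤ ‖L‖ₑ * ((‖f ·‖ₑ) ⋆ₗ[μ] (‖g ·‖ₑ)) x :=
  calc ‖(f ⋆[L, μ] g) x‖ₑ
    _ ≤ ∫⁻ y, ‖L (f y) (g (x - y))‖ₑ ∂μ := enorm_integral_le_lintegral_enorm _
    _ ≤ ∫⁻ y, ‖L‖ₑ * (‖f y‖ₑ * ‖g (-y + x)‖ₑ) ∂μ := lintegral_mono fun y => by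
      rw [neg_add_eq_sub, ← mul_assoc]
      exact (L (f y)).le_of_opENorm_le (L.le_opENorm (f y)) _
    _ = ‖L‖ₑ * ((‖f ·‖ₑ) ⋆ₗ[μ] (‖g ·‖ₑ)) x := lintegral_const_mul' _ _ enorm_ne_top

theorem eLpNorm_convolution_le [MeasurableAdd₂ G] [MeasurableNeg G] [SFinite μ]
    [μ.IsAddLeftInvariant] (L : E →L[𝕜] E' →L[𝕜] F) {f : G → E} {g : G → E'}
    (hf : AEStronglyMeasurable f μ) (hg : AEStronglyMeasurable g μ) {p : ℝ≥0∞} (hp : 1 ≤ p) :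
    eLpNorm (f ⋆[L, μ] g) p μ ≤ ‖L‖ₑ * (eLpNorm f 1 μ * eLpNorm g p μ) :=
  calc eLpNorm (f ⋆[L, μ] g) p μ
    _ ≤ ‖L‖ₑ * eLpNorm ((‖f ·‖ₑ) ⋆ₗ[μ] (‖g ·‖ₑ)) p μ :=
      eLpNorm_le_nnreal_smul_eLpNorm_of_ae_le_mul' (c := ‖L‖₊)
        (.of_forall (enorm_convolution_le L f g)) p
    _ ≤ ‖L‖ₑ * (eLpNorm f 1 μ * eLpNorm g p μ) := by
      rw [eLpNorm_one_eq_lintegral_enorm, ← eLpNorm_enorm g]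
      gcongr
      exact eLpNorm_lconvolution_le hf.enorm hg.enorm hp

theorem convolution_sub_distrib {L : E →L[𝕜] E' →L[𝕜] F} {f f' : G → E} {g : G → E'}
    (hf : ConvolutionExists f g L μ) (hf' : ConvolutionExists f' g L μ) :
    (f - f') ⋆[L, μ] g = f ⋆[L, μ] g - f' ⋆[L, μ] g := by
  ext x
  simp only [convolution_def, Pi.sub_apply, map_sub, _root_.sub_apply]
  exact integral_sub (hf x) (hf' x)

end Convolution

end Young

section Gamma

theorem measurable_gammaPDF (a r : ℝ) : Measurable (gammaPDF a r) :=
  (measurable_gammaPDFReal a r).ennreal_ofReal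

theorem ae_gammaMeasure_pos (a r : ℝ) : ∀ᵐ x ∂gammaMeasure a r, 0 < x := by
  rw [gammaMeasure, ae_withDensity_iff (measurable_gammaPDF a r)]
  filter_upwards [Measure.ae_ne volume (0 : ℝ)] with x hx hpdf
  exact hx.lt_or_gt.resolve_left fun h => hpdf (gammaPDF_of_neg h)

theorem mgf_id_gammaMeasure {a r t : ℝ} (ha : 0 < a) (hr : 0 < r) (ht : t < r) :
    mgf id (gammaMeasure a r) t = (r / (r - t)) ^ a := by
  have hpdf : ∀ x ∈ Set.Ioi (0 : ℝ), gammaPDFReal a r x * Real.exp (t * x) =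
      r ^ a / Real.Gamma a * (x ^ (a - 1) * Real.exp (-((r - t) * x))) := fun x hx => by
    rw [gammaPDFReal, if_pos (le_of_lt hx), mul_assoc, mul_assoc, ← Real.exp_add]
    ring_nf
  calc mgf id (gammaMeasure a r) t
    _ = ∫ x, gammaPDFReal a r x * Real.exp (t * x) := by
      rw [mgf, gammaMeasure, integral_withDensity_eq_integral_toReal_smul
        (measurable_gammaPDF a r) (.of_forall fun x => ENNReal.ofReal_lt_top)]
      simp [gammaPDF, ENNReal.toReal_ofReal (gammaPDFReal_nonneg ha hr _)]
    _ = ∫ x in Set.Ioi 0, gammaPDFReal a r x * Real.exp (t * x) := by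
      rw [← integral_Ici_eq_integral_Ioi, setIntegral_eq_integral_of_forall_compl_eq_zero]
      intro x hx
      rw [gammaPDFReal, if_neg (by simpa using hx), zero_mul]
    _ = r ^ a / Real.Gamma a * ((1 / (r - t)) ^ a * Real.Gamma a) := by
      rw [setIntegral_congr_fun measurableSet_Ioi hpdf, integral_const_mul,
        Real.integral_rpow_mul_exp_neg_mul_Ioi ha (sub_pos.2 ht)]
    _ = (r / (r - t)) ^ a := by
      have hΓ := (Real.Gamma_pos_of_pos ha).ne'
      rw [div_eq_mul_one_div r, Real.mul_rpow hr.le (one_div_pos.2 (sub_pos.2 ht)).le]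
      field_simp

end Gamma

section HeatKernel

variable {V : Type*} [NormedAddCommGroup V]

section Definition

variable [Module ℝ V]

/-- The heat kernel on a Euclidean space, parametrised so that its Fourier transform, in the
normalisation `𝓕 f ξ = ∫ exp (-2πi⟪x, ξ⟫) f x`, is `exp (-τ‖ξ‖²)`. -/
noncomputable def heatKernel (τ : ℝ) (x : V) : ℝ :=
  (π / τ) ^ (Module.finrank ℝ V / 2 : ℝ) * Real.exp (-(π ^ 2 / τ) * ‖x‖ ^ 2)

theorem heatKernel_nonneg {τ : ℝ} (hτ : 0 < τ) (x : V) : 0 ≤ heatKernel τ x := by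
  unfold heatKernel
  positivity

theorem measurable_uncurry_heatKernel [MeasurableSpace V] [OpensMeasurableSpace V] :
    Measurable (Function.uncurry fun (x : V) (τ : ℝ) => heatKernel τ x) := by
  unfold heatKernel Function.uncurry
  fun_prop

end Definition

variable [InnerProductSpace ℝ V] [FiniteDimensional ℝ V] [MeasurableSpace V] [BorelSpace V]

theorem fourier_heatKernel {τ : ℝ} (hτ : 0 < τ) (ξ : V) :
    𝓕 (fun x : V => (heatKernel τ x : ℂ)) ξ = (Real.exp (-τ * ‖ξ‖ ^ 2) : ℝ) := by
  have hb : 0 < ((π ^ 2 / τ : ℝ) : ℂ).re := by rw [ofReal_re]; positivity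
  have hτ₀ := ofReal_ne_zero.2 hτ.ne'
  have hπ₀ := ofReal_ne_zero.2 Real.pi_ne_zero
  set d : ℝ := Module.finrank ℝ V / 2 with hd
  have hconst : (((π / τ) ^ d : ℝ) : ℂ) * (π / (π ^ 2 / τ : ℝ)) ^ (d : ℂ) = 1 := by
    have hinv : (π / (π ^ 2 / τ : ℝ) : ℂ) = ((τ / π : ℝ) : ℂ) := by push_cast; field_simp
    have hdiv : π / τ * (τ / π) = 1 := by field_simp
    rw [hinv, ← ofReal_cpow (by positivity), ← ofReal_mul,
      ← Real.mul_rpow (by positivity) (by positivity), hdiv, Real.one_rpow, ofReal_one]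
  have hexp : -π ^ 2 * ‖ξ‖ ^ 2 / ((π ^ 2 / τ : ℝ) : ℂ) = ((-τ * ‖ξ‖ ^ 2 : ℝ) : ℂ) := by
    push_cast
    field_simp
  calc 𝓕 (fun x : V => (heatKernel τ x : ℂ)) ξ
    _ = 𝓕 ((((π / τ) ^ d : ℝ) : ℂ) • fun x : V => cexp (-(π ^ 2 / τ : ℝ) * ‖x‖ ^ 2)) ξ := by
      simp only [heatKernel, ofReal_mul, ofReal_exp, ofReal_neg, ofReal_pow]
      rfl
    _ = (((π / τ) ^ d : ℝ) : ℂ) * 𝓕 (fun x : V => cexp (-(π ^ 2 / τ : ℝ) * ‖x‖ ^ 2)) ξ :=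
      congrFun (VectorFourier.fourierIntegral_const_smul _ _ _ _ _) ξ
    _ = (Real.exp (-τ * ‖ξ‖ ^ 2) : ℝ) := by
      have hd' : (d : ℂ) = Module.finrank ℝ V / 2 := by push_cast [hd]; rfl
      rw [fourier_gaussian_innerProductSpace hb, hexp, ← hd', ← mul_assoc, hconst, one_mul,
        ofReal_exp]

theorem integral_heatKernel {τ : ℝ} (hτ : 0 < τ) : ∫ x : V, heatKernel τ x = 1 := by
  simp only [heatKernel]
  rw [integral_const_mul, GaussianFourier.integral_rexp_neg_mul_sq_norm (by positivity),
    ← Real.mul_rpow (by positivity) (by positivity)]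
  have : π / τ * (π / (π ^ 2 / τ)) = 1 := by field_simp
  rw [this, Real.one_rpow]

theorem integrable_heatKernel {τ : ℝ} (hτ : 0 < τ) : Integrable (heatKernel τ : V → ℝ) :=
  .of_integral_ne_zero (by rw [integral_heatKernel hτ]; exact one_ne_zero)

theorem integrable_uncurry_heatKernel {ν : Measure ℝ} [IsFiniteMeasure ν]
    (hν : ∀ᵐ τ ∂ν, 0 < τ) :
    Integrable (Function.uncurry fun (x : V) (τ : ℝ) => heatKernel τ x) (volume.prod ν) := by
  refine (integrable_prod_iff' measurable_uncurry_heatKernel.aestronglyMeasurable).2 ⟨?_, ?_⟩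
  · filter_upwards [hν] with τ hτ using integrable_heatKernel hτ
  · refine (integrable_const (1 : ℝ)).congr ?_
    filter_upwards [hν] with τ hτ
    simp only [Function.uncurry, Real.norm_of_nonneg (heatKernel_nonneg hτ _),
      integral_heatKernel hτ]

end HeatKernel

section Fourier

variable {V : Type*} [NormedAddCommGroup V] [InnerProductSpace ℝ V] [FiniteDimensional ℝ V]
  [MeasurableSpace V] [BorelSpace V]

theorem fourier_integral_eq_integral_fourier {Ω E : Type*} [MeasurableSpace Ω] {ν : Measure Ω}
    [SFinite ν] [NormedAddCommGroup E] [NormedSpace ℂ E] {f : V → Ω → E}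
    (hf : Integrable (Function.uncurry f) (volume.prod ν)) (ξ : V) :
    𝓕 (fun x => ∫ ω, f x ω ∂ν) ξ = ∫ ω, 𝓕 (f · ω) ξ ∂ν := by
  have hchar : AEStronglyMeasurable (fun x : V => (𝐞 (-inner ℝ x ξ) : ℂ)) :=
    Continuous.aestronglyMeasurable (by fun_prop)
  simp only [Real.fourier_eq, Circle.smul_def, ← integral_smul]
  exact integral_integral_swap <| hf.bdd_smul 1 hchar.comp_fst (.of_forall fun z => by
    rw [Circle.norm_coe])

end Fourier

section BesselKernel

variable {V : Type*} [NormedAddCommGroup V]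

/-- The symbol `(1 + ‖ξ‖²) ^ (-r / 2)` of the Bessel potential `J_r` of real order `r`. -/
noncomputable def besselSymbol (r : ℝ) (ξ : V) : ℂ :=
  ((1 + ‖ξ‖ ^ 2) ^ (-r / 2) : ℝ)

theorem besselSymbol_mul_besselSymbol (r s : ℝ) :
    (besselSymbol r * besselSymbol s : V → ℂ) = besselSymbol (r + s) := by
  ext ξ
  rw [Pi.mul_apply, besselSymbol, besselSymbol, besselSymbol, ← ofReal_mul,
    ← Real.rpow_add (by positivity)]
  ring_nf

theorem besselSymbol_zero : (besselSymbol 0 : V → ℂ) = fun _ => 1 := by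
  ext ξ
  simp [besselSymbol]

theorem hasTemperateGrowth_besselSymbol [InnerProductSpace ℝ V] (r : ℝ) :
    (besselSymbol r : V → ℂ).HasTemperateGrowth := by
  unfold besselSymbol
  fun_prop

/-- The Bessel kernel of order `r > 0`, the convolution kernel of `J_r`, as the mixture of heat
kernels whose time is Gamma distributed. -/
noncomputable def besselKernel [Module ℝ V] (r : ℝ) (x : V) : ℂ :=
  ∫ τ, (heatKernel τ x : ℂ) ∂gammaMeasure (r / 2) 1

variable [InnerProductSpace ℝ V] [FiniteDimensional ℝ V] [MeasurableSpace V] [BorelSpace V]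

theorem integrable_besselKernel {r : ℝ} (hr : 0 < r) : Integrable (besselKernel r : V → ℂ) := by
  have := isProbabilityMeasure_gammaMeasure (half_pos hr) one_pos
  have h := (integrable_uncurry_heatKernel (V := V) (ae_gammaMeasure_pos (r / 2) 1)).ofReal (𝕜 := ℂ)
  exact h.integral_prod_left

theorem fourier_besselKernel {r : ℝ} (hr : 0 < r) :
    𝓕 (besselKernel r : V → ℂ) = besselSymbol r := by
  have := isProbabilityMeasure_gammaMeasure (half_pos hr) one_pos
  have hpos := ae_gammaMeasure_pos (r / 2) 1
  ext ξ
  calc 𝓕 (besselKernel r : V → ℂ) ξ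
    _ = ∫ τ, 𝓕 (fun x : V => (heatKernel τ x : ℂ)) ξ ∂gammaMeasure (r / 2) 1 :=
      fourier_integral_eq_integral_fourier (integrable_uncurry_heatKernel hpos).ofReal ξ
    _ = ∫ τ, ((Real.exp (-‖ξ‖ ^ 2 * τ) : ℝ) : ℂ) ∂gammaMeasure (r / 2) 1 := by
      refine integral_congr_ae ?_
      filter_upwards [hpos] with τ hτ
      rw [fourier_heatKernel hτ, neg_mul_comm, mul_comm]
    _ = (mgf id (gammaMeasure (r / 2) 1) (-‖ξ‖ ^ 2) : ℝ) := integral_ofReal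
    _ = besselSymbol r ξ := by
      have hlt : -‖ξ‖ ^ 2 < 1 := by nlinarith [sq_nonneg ‖ξ‖]
      rw [mgf_id_gammaMeasure (half_pos hr) one_pos hlt, besselSymbol, sub_neg_eq_add, one_div,
        Real.inv_rpow (by positivity), neg_div, Real.rpow_neg (by positivity)]

end BesselKernel

section SchwartzConvolution

theorem bddAbove_range_norm_schwartzMap {V F : Type*} [NormedAddCommGroup V] [NormedSpace ℝ V]
    [NormedAddCommGroup F] [NormedSpace ℝ F] (ψ : 𝓢(V, F)) : BddAbove (Set.range (‖ψ ·‖)) :=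
  ⟨SchwartzMap.seminorm ℝ 0 0 ψ, Set.forall_mem_range.2 (ψ.norm_le_seminorm ℝ)⟩

variable {V E F G : Type*} [NormedAddCommGroup V] [InnerProductSpace ℝ V] [FiniteDimensional ℝ V]
  [MeasurableSpace V] [BorelSpace V] [NormedAddCommGroup E] [NormedSpace ℂ E]
  [NormedAddCommGroup F] [NormedSpace ℂ F] [NormedAddCommGroup G] [NormedSpace ℂ G]

theorem exists_schwartzMap_eLpNorm_sub_le {p : ℝ≥0∞} (hp_top : p ≠ ∞) (hp : 1 ≤ p) {f : V → E}
    (hf : MemLp f p) {ε : ℝ} (hε : 0 < ε) :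
    ∃ g : 𝓢(V, E), eLpNorm (f - ⇑g) p ≤ ENNReal.ofReal ε := by
  obtain ⟨g, hg_supp, hg_smooth, hg⟩ := hf.exist_eLpNorm_sub_le hp_top hp hε
  exact ⟨hg_supp.toSchwartzMap hg_smooth, hg⟩

theorem eLpNorm_schwartzMap_convolution_le [CompleteSpace E] [CompleteSpace F] [CompleteSpace G]
    (L : E →L[ℂ] F →L[ℂ] G) (f : 𝓢(V, E)) (g : 𝓢(V, F)) {p : ℝ≥0∞} (hp : 1 ≤ p) :
    eLpNorm (SchwartzMap.convolution L f g) p ≤ ‖L‖ₑ * (eLpNorm f 1 * eLpNorm g p) := by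
  rw [show ⇑(SchwartzMap.convolution L f g) = f ⋆[L] g from
    funext (SchwartzMap.convolution_apply L f g)]
  exact eLpNorm_convolution_le L f.continuous.aestronglyMeasurable
    g.continuous.aestronglyMeasurable hp

theorem fourierMultiplierCLM_mul_convolution [CompleteSpace E] [CompleteSpace F] [CompleteSpace G]
    (L : E →L[ℂ] F →L[ℂ] G) {m₁ m₂ : V → ℂ} (hm₁ : m₁.HasTemperateGrowth)
    (hm₂ : m₂.HasTemperateGrowth) (f : 𝓢(V, E)) (g : 𝓢(V, F)) :
    SchwartzMap.fourierMultiplierCLM G (m₁ * m₂) (SchwartzMap.convolution L f g) =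
      SchwartzMap.convolution L (SchwartzMap.fourierMultiplierCLM E m₁ f)
        (SchwartzMap.fourierMultiplierCLM F m₂ g) := by
  rw [SchwartzMap.fourierMultiplierCLM_apply, SchwartzMap.fourier_convolution,
    ← FourierTransform.fourierInv_fourier_eq (F := 𝓢(V, G)) (SchwartzMap.convolution L _ _),
    SchwartzMap.fourier_convolution]
  congr 1
  ext ξ
  simp only [SchwartzMap.fourierMultiplierCLM_apply, FourierTransform.fourier_fourierInv_eq,
    SchwartzMap.pairing_apply_apply, SchwartzMap.smulLeftCLM_apply_apply (hm₁.mul hm₂),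
    SchwartzMap.smulLeftCLM_apply_apply hm₁, SchwartzMap.smulLeftCLM_apply_apply hm₂,
    Pi.mul_apply, map_smul, smul_apply, smul_smul]
  rw [mul_comm]

theorem convolution_eq_fourierMultiplierCLM [CompleteSpace F] {K : V → ℂ} (hK : Integrable K)
    (hK' : (𝓕 K).HasTemperateGrowth) (ψ : 𝓢(V, F)) :
    K ⋆[lsmul ℂ ℂ] ψ = SchwartzMap.fourierMultiplierCLM F (𝓕 K) ψ := by
  have hfourier : 𝓕 (K ⋆[lsmul ℂ ℂ] ψ) = ⇑(SchwartzMap.smulLeftCLM F (𝓕 K) (𝓕 ψ)) := by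
    ext ξ
    rw [Real.fourier_smul_convolution_eq hK ψ.integrable, SchwartzMap.smulLeftCLM_apply_apply hK',
      SchwartzMap.fourier_coe]
  have hcont : Continuous (K ⋆[lsmul ℂ ℂ] ψ) :=
    (bddAbove_range_norm_schwartzMap ψ).continuous_convolution_right_of_integrable _ hK ψ.continuous
  rw [SchwartzMap.fourierMultiplierCLM_apply, SchwartzMap.fourierInv_coe, ← hfourier,
    hcont.fourierInv_fourier_eq (hK.integrable_convolution _ ψ.integrable)
      (hfourier ▸ SchwartzMap.integrable _)]

end SchwartzConvolution

section BesselPotential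

variable {V F : Type*} [NormedAddCommGroup V] [InnerProductSpace ℝ V] [FiniteDimensional ℝ V]
  [MeasurableSpace V] [BorelSpace V] [NormedAddCommGroup F] [NormedSpace ℂ F]

/-- The Bessel potential `J_r` of real order `r`, as an operator on vector-valued Schwartz
functions. -/
noncomputable def besselPotentialCLM (r : ℝ) : 𝓢(V, F) →L[ℂ] 𝓢(V, F) :=
  SchwartzMap.fourierMultiplierCLM F (besselSymbol r)

theorem besselPotential_ofReal {n : ℕ} (r : ℝ) (φ : 𝓢(EuclideanSpace ℝ (Fin n), ℂ)) :
    besselPotential n r φ = besselPotentialCLM r φ := by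
  rw [besselPotentialCLM, SchwartzMap.fourierMultiplierCLM_apply, SchwartzMap.fourierInv_coe,
    besselPotential]
  congr 1
  ext ξ
  rw [SchwartzMap.smulLeftCLM_apply_apply (hasTemperateGrowth_besselSymbol r), besselSymbol,
    SchwartzMap.fourier_coe, ofReal_cpow (by positivity), smul_eq_mul]
  push_cast
  rfl

variable [CompleteSpace F]

theorem besselPotentialCLM_zero : (besselPotentialCLM 0 : 𝓢(V, F) →L[ℂ] 𝓢(V, F)) = .id ℂ _ := by
  rw [besselPotentialCLM, besselSymbol_zero, SchwartzMap.fourierMultiplierCLM_const, one_smul]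

theorem besselPotentialCLM_besselPotentialCLM (r s : ℝ) (φ : 𝓢(V, F)) :
    besselPotentialCLM r (besselPotentialCLM s φ) = besselPotentialCLM (r + s) φ := by
  rw [besselPotentialCLM, besselPotentialCLM,
    SchwartzMap.fourierMultiplierCLM_fourierMultiplierCLM_apply
      (hasTemperateGrowth_besselSymbol r) (hasTemperateGrowth_besselSymbol s),
    besselSymbol_mul_besselSymbol, besselPotentialCLM]

theorem besselPotentialCLM_add_convolution (r s : ℝ) (f : 𝓢(V, ℂ)) (g : 𝓢(V, F)) :
    besselPotentialCLM (r + s) (SchwartzMap.convolution (lsmul ℂ ℂ) f g) =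
      SchwartzMap.convolution (lsmul ℂ ℂ) (besselPotentialCLM r f) (besselPotentialCLM s g) := by
  rw [besselPotentialCLM, ← besselSymbol_mul_besselSymbol]
  exact fourierMultiplierCLM_mul_convolution _ (hasTemperateGrowth_besselSymbol r)
    (hasTemperateGrowth_besselSymbol s) f g

theorem besselKernel_convolution {r : ℝ} (hr : 0 < r) (ψ : 𝓢(V, F)) :
    besselKernel r ⋆[lsmul ℂ ℂ] ψ = besselPotentialCLM r ψ := by
  have h𝓕 : 𝓕 (besselKernel r : V → ℂ) = besselSymbol r := fourier_besselKernel hr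
  rw [convolution_eq_fourierMultiplierCLM (integrable_besselKernel hr)
    (h𝓕 ▸ hasTemperateGrowth_besselSymbol r), h𝓕, besselPotentialCLM]

theorem eLpNorm_besselPotentialCLM_sub_convolution_le {r : ℝ} (hr : 0 < r) (S : 𝓢(V, ℂ))
    (ψ : 𝓢(V, F)) {p : ℝ≥0∞} (hp : 1 ≤ p) :
    eLpNorm (besselPotentialCLM r ψ - SchwartzMap.convolution (lsmul ℂ ℂ) S ψ) p ≤
      eLpNorm (besselKernel r - ⇑S) 1 * eLpNorm ψ p := by
  have hG := integrable_besselKernel (V := V) hr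
  have hψ := ψ.continuous.aestronglyMeasurable (μ := volume)
  have hexists {K : V → ℂ} (hK : Integrable K) : ConvolutionExists K ψ (lsmul ℂ ℂ) :=
    convolutionExists_of_integrable_of_bddAbove _ hK hψ (bddAbove_range_norm_schwartzMap ψ)
  have hdiff : ⇑(besselPotentialCLM r ψ - SchwartzMap.convolution (lsmul ℂ ℂ) S ψ) =
      (besselKernel r - ⇑S) ⋆[lsmul ℂ ℂ] ψ := by
    rw [convolution_sub_distrib (hexists hG) (hexists S.integrable), besselKernel_convolution hr]
    ext x
    rw [sub_apply, Pi.sub_apply, SchwartzMap.convolution_apply]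
  rw [hdiff]
  grw [eLpNorm_convolution_le _ (hG.sub S.integrable).aestronglyMeasurable hψ hp, opENorm_lsmul_le,
    one_mul]

theorem quasinormability_DLp_general {s t : ℝ} (hst : s < t) {ε : ℝ} (hε : 0 < ε) :
    ∃ T : 𝓢(V, F) →L[ℂ] 𝓢(V, F),
      (∀ p, 1 ≤ p → ∀ φ, eLpNorm (besselPotentialCLM (-s) (φ - T φ)) p ≤
        ENNReal.ofReal ε * eLpNorm (besselPotentialCLM (-t) φ) p) ∧
      ∀ u : ℝ, ∃ C : ℝ, 0 < C ∧ ∀ p, 1 ≤ p → ∀ φ, eLpNorm (besselPotentialCLM (-u) (T φ)) p ≤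
        ENNReal.ofReal C * eLpNorm (besselPotentialCLM (-t) φ) p := by
  obtain ⟨S, hS⟩ := exists_schwartzMap_eLpNorm_sub_le ENNReal.one_ne_top le_rfl
    (memLp_one_iff_integrable.2 (integrable_besselKernel (V := V) (sub_pos.2 hst))) hε
  let T : 𝓢(V, F) →L[ℂ] 𝓢(V, F) :=
    SchwartzMap.convolution (lsmul ℂ ℂ) S ∘L besselPotentialCLM (s - t)
  have hT (a : ℝ) (φ : 𝓢(V, F)) : besselPotentialCLM (a - s) (T φ) =
      SchwartzMap.convolution (lsmul ℂ ℂ) (besselPotentialCLM a S) (besselPotentialCLM (-t) φ) := by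
    rw [comp_apply, sub_eq_add_neg, besselPotentialCLM_add_convolution,
      besselPotentialCLM_besselPotentialCLM, neg_add_eq_sub, sub_sub_cancel_left]
  refine ⟨T, fun p hp φ => ?_, fun u => ?_⟩
  · have herror : besselPotentialCLM (-s) (φ - T φ) = besselPotentialCLM (t - s)
        (besselPotentialCLM (-t) φ) -
          SchwartzMap.convolution (lsmul ℂ ℂ) S (besselPotentialCLM (-t) φ) := by
      have hTs := hT 0 φ
      rw [zero_sub, besselPotentialCLM_zero, ContinuousLinearMap.id_apply] at hTs
      rw [map_sub, hTs, besselPotentialCLM_besselPotentialCLM, sub_add_eq_add_sub,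
        add_neg_cancel, zero_sub]
    grw [herror, eLpNorm_besselPotentialCLM_sub_convolution_le (sub_pos.2 hst) S _ hp, hS]
  · obtain ⟨C, hC, -⟩ := ENNReal.lt_iff_exists_nnreal_btwn.1
      ((besselPotentialCLM (s - u) S).memLp 1 volume).eLpNorm_lt_top
    refine ⟨C, NNReal.coe_pos.2 (ENNReal.coe_pos.1 hC.bot_lt), fun p hp φ => ?_⟩
    have hTu := hT (s - u) φ
    rw [sub_sub_cancel_left] at hTu
    grw [hTu, eLpNorm_schwartzMap_convolution_le _ _ _ hp, opENorm_lsmul_le, one_mul, hC,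
      ENNReal.ofReal_coe_nnreal]

end BesselPotential

/-- Quasinormability criterion for `𝒟_{L^p}`: for `1 ≤ p ≤ ∞`, `0 ≤ s < t < u` and every
`ε > 0` there is `C > 0` such that every Schwartz `φ` decomposes as `φ = φ₁ + φ₂` with
`‖J_{-s} φ₁‖_p ≤ ε ‖J_{-t} φ‖_p` and `‖J_{-u} φ₂‖_p ≤ C ‖J_{-t} φ‖_p`. -/
theorem quasinormability_DLp (n : ℕ) (p : ℝ≥0∞) (hp : 1 ≤ p)
    (s t u : ℝ) (hs : 0 ≤ s) (hst : s < t) (htu : t < u) :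
    ∀ ε : ℝ, 0 < ε → ∃ C : ℝ, 0 < C ∧
      ∀ φ : 𝓢(EuclideanSpace ℝ (Fin n), ℂ),
        ∃ φ₁ φ₂ : 𝓢(EuclideanSpace ℝ (Fin n), ℂ), φ = φ₁ + φ₂ ∧
          eLpNorm (besselPotential n (-(s : ℂ)) ⇑φ₁) p volume ≤
            ENNReal.ofReal ε * eLpNorm (besselPotential n (-(t : ℂ)) ⇑φ) p volume ∧
          eLpNorm (besselPotential n (-(u : ℂ)) ⇑φ₂) p volume ≤
            ENNReal.ofReal C * eLpNorm (besselPotential n (-(t : ℂ)) ⇑φ) p volume := by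
  intro ε hε
  obtain ⟨T, herror, hbound⟩ :=
    quasinormability_DLp_general (V := EuclideanSpace ℝ (Fin n)) (F := ℂ) hst hε
  obtain ⟨C, hC, hTu⟩ := hbound u
  refine ⟨C, hC, fun φ => ⟨φ - T φ, T φ, (sub_add_cancel φ (T φ)).symm, ?_⟩⟩
  simp only [← ofReal_neg, besselPotential_ofReal]
  exact ⟨herror p hp φ, hTu p hp φ⟩
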